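/- arXiv:1706.00101 — 9 statements merged into one kernel-verified Lean document; each statement's English description precedes it below -/
import Mathlib

section
/- Let F be a finite field with q elements and let g_0, g_1, …, g_k ∈ F^k be k+1 column vectors such that every k of them are linearly independent. Fix an index α ∈ {0, …, k} and a value l_α ∈ F. Then the number of tuples (l_j)_{j ∈ {0,…,k}, j ≠ α} ∈ F^k for which the system of k+1 equations ⟨u, g_j⟩ = l_j (for all j = 0, …, k, including j = α with the fixed value l_α) has NO solution u ∈ F^k is exactly q^k − q^{k−1}. (This counts the number of delivery-phase equations in which a fixed user participates.) -/
/-!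
The tuples with `l α = lα` number `q ^ k`, so it suffices to show that exactly `q ^ (k - 1)` of
them are solvable. Choose an index `j ≠ α`. The `k` equations other than the `j`-th have an
invertible coefficient matrix, so a solvable tuple is determined by its entries off `j`
(`exists_unique_solution`), and these entries may be arbitrary apart from the one at `α`, which is
`lα`. Hence deleting the `j`-th entry is a bijection from the solvable tuples onto the vectors of
`F ^ k` with one prescribed entry, and there are `q ^ (k - 1)` of those (`card_fixed_entry`).
-/

lemma card_fixed_entry {n : ℕ} (F : Type*) [Fintype F] (i : Fin (n + 1)) (c : F) :
    Nat.card {v : Fin (n + 1) → F // v i = c} = Fintype.card F ^ n := by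
  have e : {v : Fin (n + 1) → F // v i = c} ≃ (Fin n → F) :=
    { toFun := fun v m => v.1 (i.succAbove m)
      invFun := fun w => ⟨i.insertNth c w, by simp⟩
      left_inv := by
        rintro ⟨v, rfl⟩
        apply Subtype.ext
        exact Fin.insertNth_self_removeNth i v
      right_inv := by
        intro w
        ext m
        simp }
  rw [Nat.card_congr e]
  simp

lemma exists_unique_solution {k : ℕ} {F : Type*} [Field F] (h : Fin k → Fin k → F)
    (hind : LinearIndependent F h) (v : Fin k → F) :
    ∃! u : Fin k → F, ∀ m, ∑ a, u a * h m a = v m := by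
  have hu : IsUnit (Matrix.of h) := Matrix.linearIndependent_rows_iff_isUnit.mp hind
  have key : ∀ u : Fin k → F,
      (∀ m, ∑ a, u a * h m a = v m) ↔ (Matrix.of h).mulVec u = v := by
    intro u
    simp [funext_iff, Matrix.mulVec, dotProduct, mul_comm]
  simp only [key]
  exact Function.Bijective.existsUnique
    ⟨Matrix.mulVec_injective_iff_isUnit.mpr hu, Matrix.mulVec_surjective_iff_isUnit.mpr hu⟩ v

/-- given `k+1` vectors of `F^k`, any `k` of which are linearly
independent, a fixed index `α` and a fixed value `lα`, the number of tuples
`(l_j)_{j ≠ α}` for which the system `⟨u, g j⟩ = l j` (for all `j`, with `l α = lα`)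
has no solution is exactly `q^k - q^(k-1)`. -/
theorem stmt_4 {k q : ℕ} (F : Type*) [Field F] [Fintype F]
    (hq : Fintype.card F = q) (hk : 1 ≤ k)
    (g : Fin (k + 1) → Fin k → F)
    (hind : ∀ j : Fin (k + 1),
      LinearIndependent F (fun m : Fin k => g (j.succAbove m)))
    (α : Fin (k + 1)) (lα : F) :
    Nat.card {l : Fin (k + 1) → F //
        l α = lα ∧ ¬∃ u : Fin k → F, ∀ j, ∑ a, u a * g j a = l j} =
      q ^ k - q ^ (k - 1) := by
  classical
  subst hq
  obtain ⟨n, rfl⟩ : ∃ n, k = n + 1 := ⟨k - 1, by omega⟩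
  obtain ⟨j, hj⟩ := exists_ne α
  obtain ⟨m₀, rfl⟩ := Fin.exists_succAbove_eq hj.symm
  set S : (Fin (n + 1 + 1) → F) → Prop :=
    fun l => ∃ u : Fin (n + 1) → F, ∀ j, ∑ a, u a * g j a = l j with hS
  have solvable : Nat.card {l : Fin (n + 1 + 1) → F // l (j.succAbove m₀) = lα ∧ S l} =
      Fintype.card F ^ n := by
    rw [← card_fixed_entry F m₀ lα]
    refine Nat.card_congr (Equiv.ofBijective
      (fun l => ⟨fun m => l.1 (j.succAbove m), l.2.1⟩) ⟨?_, ?_⟩)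
    · rintro ⟨l, hl, u, hu⟩ ⟨l', hl', u', hu'⟩ h
      have h' : ∀ m, l (j.succAbove m) = l' (j.succAbove m) := congrFun (congrArg Subtype.val h)
      have huu : u = u' := (exists_unique_solution _ (hind j) _).unique
        (fun m => hu (j.succAbove m)) (fun m => (hu' (j.succAbove m)).trans (h' m).symm)
      subst huu
      exact Subtype.ext (funext fun i => (hu i).symm.trans (hu' i))
    · rintro ⟨v, hv⟩
      obtain ⟨u, hu, -⟩ := exists_unique_solution _ (hind j) v
      exact ⟨⟨fun i => ∑ a, u a * g i a, (hu m₀).trans hv, u, fun _ => rfl⟩,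
        Subtype.ext (funext hu)⟩
  have total := card_fixed_entry F (j.succAbove m₀) lα
  have split : Nat.card {l : Fin (n + 1 + 1) → F // l (j.succAbove m₀) = lα} =
      Nat.card {l : Fin (n + 1 + 1) → F // l (j.succAbove m₀) = lα ∧ S l} +
      Nat.card {l : Fin (n + 1 + 1) → F // l (j.succAbove m₀) = lα ∧ ¬ S l} := by
    simp only [Nat.card_eq_fintype_card, Fintype.card_subtype]
    rw [← Finset.filter_filter, ← Finset.filter_filter, Finset.card_filter_add_card_filter_not]
  change Nat.card {l : Fin (n + 1 + 1) → F // l (j.succAbove m₀) = lα ∧ ¬ S l} = _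
  rw [Nat.add_sub_cancel]
  omega
end

section
/- Let k ≥ 1 and n ≥ k+1 be integers, and let z be the least positive integer such that (k+1) divides nz. For 0 ≤ a ≤ nz/(k+1) − 1, define S_a = {(a(k+1)+i) mod n : 0 ≤ i ≤ k}. Then each S_a has exactly k+1 elements, and every j ∈ {0, …, n−1} belongs to exactly z of the sets S_0, …, S_{nz/(k+1)−1}. (Equivalently, the recovery set bipartite graph between the n parallel classes and the nz/(k+1) recovery sets is biregular with parallel-class degree z and recovery-set degree k+1, with no multiple edges.) -/
/-!
The windows tile the integer interval `[0, n z)` into consecutive blocks of length `k + 1`,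
since `(k + 1) * (n z / (k + 1)) = n z`. The residue `j` has exactly the `z` lifts `j + n t`,
`t < z`, in that interval, and distinct lifts lie in distinct blocks because they differ by at
least `n ≥ k + 1`. Hence `t ↦ (j + n t) / (k + 1)` is a bijection from `range z` onto the set of
blocks containing a lift of `j`. For the same reason reduction mod `n` is injective on each block.
-/

/-- with `z` the least positive integer such that `(k+1) ∣ n z`, the
windows `S_a = {(a(k+1)+i) mod n : 0 ≤ i ≤ k}` for `0 ≤ a < nz/(k+1)` each have
exactly `k+1` elements, and every `j ∈ {0,…,n-1}` lies in exactly `z` of them. -/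
theorem stmt_5 (k n z : ℕ) (hk : 1 ≤ k) (hn : k + 1 ≤ n)
    (hz : IsLeast {z' : ℕ | 0 < z' ∧ (k + 1) ∣ n * z'} z) :
    (∀ a < n * z / (k + 1),
      (Finset.image (fun i : Fin (k + 1) => (a * (k + 1) + (i : ℕ)) % n)
          Finset.univ).card = k + 1) ∧
    (∀ j < n,
      (Finset.filter (fun a => ∃ i : Fin (k + 1), (a * (k + 1) + (i : ℕ)) % n = j)
          (Finset.range (n * z / (k + 1)))).card = z) := by
  obtain ⟨⟨-, hdvd⟩, -⟩ := hz
  refine ⟨fun a _ => ?_, fun j hj => ?_⟩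
  · rw [Finset.card_image_of_injective, Finset.card_univ, Fintype.card_fin]
    intro i i' h
    have h' : (i : ℕ) ≡ i' [MOD n] := Nat.ModEq.add_left_cancel' (a * (k + 1)) h
    exact Fin.ext (h'.eq_of_lt_of_lt (by omega) (by omega))
  · have hn0 : 0 < n := by omega
    have hM : n * z / (k + 1) * (k + 1) = n * z := Nat.div_mul_cancel hdvd
    have himg : Finset.filter (fun a => ∃ i : Fin (k + 1), (a * (k + 1) + (i : ℕ)) % n = j)
        (Finset.range (n * z / (k + 1))) =
        (Finset.range z).image (fun t => (j + n * t) / (k + 1)) := by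
      ext a
      simp only [Finset.mem_filter, Finset.mem_range, Finset.mem_image]
      constructor
      · rintro ⟨ha, i, hi⟩
        refine ⟨(a * (k + 1) + i) / n, ?_, ?_⟩
        · rw [Nat.div_lt_iff_lt_mul hn0, mul_comm z n, ← hM]
          have h1 : (a + 1) * (k + 1) ≤ n * z / (k + 1) * (k + 1) := Nat.mul_le_mul_right _ ha
          have := i.isLt
          rw [add_mul, one_mul] at h1
          omega
        · rw [← hi, Nat.mod_add_div, mul_comm a, Nat.mul_add_div (Nat.succ_pos k),
            Nat.div_eq_of_lt i.isLt, add_zero]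
      · rintro ⟨t, ht, rfl⟩
        refine ⟨?_, ⟨(j + n * t) % (k + 1), Nat.mod_lt _ (Nat.succ_pos k)⟩, ?_⟩
        · rw [Nat.div_lt_iff_lt_mul (Nat.succ_pos k), hM]
          have h1 : n * (t + 1) ≤ n * z := Nat.mul_le_mul_left n ht
          rw [mul_add, mul_one] at h1
          omega
        · rw [mul_comm, Nat.div_add_mod, Nat.add_mul_mod_self_left, Nat.mod_eq_of_lt hj]
    rw [himg, Finset.card_image_of_injOn, Finset.card_range]
    have hmono : StrictMono fun t => (j + n * t) / (k + 1) := by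
      refine strictMono_nat_of_lt_succ fun t => ?_
      calc (j + n * t) / (k + 1) < (j + n * t) / (k + 1) + 1 := Nat.lt_succ_self _
        _ = (j + n * t + (k + 1)) / (k + 1) := (Nat.add_div_right _ (Nat.succ_pos k)).symm
        _ ≤ (j + n * (t + 1)) / (k + 1) := Nat.div_le_div_right (by rw [mul_add]; omega)
    exact hmono.injective.injOn
end

section
/- Let F be a finite field and G a k×n matrix over F of rank k (with n ≥ k+1) whose row space C ⊆ F^n is invariant under the cyclic coordinate shift (i.e., G generates a cyclic code of dimension k). Suppose there exists an index a such that, with W = {(a+i) mod n : 0 ≤ i ≤ k}, for every j ∈ {0, …, k} the k×k submatrix of G with column indices W \ {(a+j) mod n} has rank k. Then for every index a′ the same property holds for the window {(a′+i) mod n : 0 ≤ i ≤ k}; in particular, G satisfies the (k,k+1)-consecutive column property. -/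
/-!
Invariance of the row space under the cyclic shift `σ` of the columns gives a square matrix `M`
with `G.submatrix id σ = M * G`. Since `σ` carries the window starting at `a + 1` to the window
starting at `a`, the `k × k` submatrix at offset `a` is `M` times the one at offset `a + 1`, so
full rank passes from `a` to `a + 1`. Offsets matter only modulo `n`, hence going forward from one
good window reaches all of them.
-/

/-- The columns (as a function `Fin k → Fin n`) of the window of `k+1` cyclically
consecutive column indices starting at offset `off`, with the `j`-th column of the
window deleted. -/
def windowDel {k n : ℕ} (hn : 0 < n) (off : ℕ) (j : Fin (k + 1)) : Fin k → Fin n :=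
  fun m => ⟨(off + ((j.succAbove m : Fin (k + 1)) : ℕ)) % n, Nat.mod_lt _ hn⟩

/-- The least positive integer `z` such that `(k+1) ∣ n * z`. -/
noncomputable def leastZ (k n : ℕ) : ℕ := sInf {z : ℕ | 0 < z ∧ (k + 1) ∣ n * z}

/-- The `(k,k+1)`-consecutive column property: for every window
`S_a = {(a(k+1)+i) mod n : 0 ≤ i ≤ k}` with `0 ≤ a < n·z/(k+1)` (`z` the least
positive integer with `(k+1) ∣ nz`) and every `j ∈ S_a`, the `k × k` submatrix of `G`
with columns indexed by `S_a \ {j}` is invertible (its determinant is a unit). -/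
def CCP {R : Type*} [CommRing R] {k n : ℕ} (hn : 0 < n)
    (G : Matrix (Fin k) (Fin n) R) : Prop :=
  ∀ a : ℕ, a < n * leastZ k n / (k + 1) → ∀ j : Fin (k + 1),
    IsUnit (G.submatrix id (windowDel hn (a * (k + 1)) j)).det

lemma windowDel_add_mul {k n : ℕ} (hn : 0 < n) (off t : ℕ) (j : Fin (k + 1)) :
    windowDel hn (off + n * t) j = windowDel hn off j := by
  funext m
  apply Fin.ext
  simp only [windowDel]
  rw [Nat.add_right_comm, Nat.add_mul_mod_self_left]

lemma windowDel_shift {k n : ℕ} (hn : 0 < n) (off : ℕ) (j : Fin (k + 1)) (m : Fin k) :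
    (⟨((windowDel hn (off + 1) j m : ℕ) + n - 1) % n, Nat.mod_lt _ hn⟩ : Fin n) =
      windowDel hn off j m := by
  apply Fin.ext
  simp only [windowDel]
  generalize ((j.succAbove m : Fin (k + 1)) : ℕ) = i
  -- `n - 1` is a genuine subtraction because `0 < n`.
  rw [Nat.add_sub_assoc hn, Nat.mod_add_mod,
    show off + 1 + i + (n - 1) = off + i + n by omega, Nat.add_mod_right]

/-- if the row space of a rank-`k` matrix `G` is invariant under the
cyclic shift of coordinates, and some window of `k+1` consecutive columns has all its
`k × k` one-column-deleted submatrices of rank `k`, then every window of `k+1`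
cyclically consecutive columns has the same property; in particular `G` satisfies the
`(k,k+1)`-consecutive column property. -/
theorem stmt_6 {k n : ℕ} (F : Type*) [Field F] [Fintype F]
    (hk : 1 ≤ k) (hkn : k + 1 ≤ n) (hn0 : 0 < n)
    (G : Matrix (Fin k) (Fin n) F)
    (hrank : G.rank = k)
    (hcyc : ∀ c : Fin n → F, c ∈ Submodule.span F (Set.range fun i : Fin k => G i) →
      (fun jj : Fin n => c ⟨((jj : ℕ) + n - 1) % n, Nat.mod_lt _ hn0⟩) ∈
        Submodule.span F (Set.range fun i : Fin k => G i))
    (hwin : ∃ a : ℕ, ∀ j : Fin (k + 1),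
      (G.submatrix id (windowDel hn0 a j)).rank = k) :
    (∀ a : ℕ, ∀ j : Fin (k + 1), (G.submatrix id (windowDel hn0 a j)).rank = k) ∧
    CCP hn0 G := by
  classical
  have hM : ∀ i : Fin k, ∃ r : Fin k → F, ∑ l, r l • G l =
      fun jj : Fin n => G i ⟨((jj : ℕ) + n - 1) % n, Nat.mod_lt _ hn0⟩ := fun i =>
    (Submodule.mem_span_range_iff_exists_fun F).1
      (hcyc (G i) (Submodule.subset_span ⟨i, rfl⟩))
  choose M hM using hM
  have hmul : ∀ (a : ℕ) (j : Fin (k + 1)), G.submatrix id (windowDel hn0 a j) =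
      Matrix.of M * G.submatrix id (windowDel hn0 (a + 1) j) := by
    intro a j
    ext i m
    have h := congrFun (hM i) (windowDel hn0 (a + 1) j m)
    simp only [windowDel_shift, Finset.sum_apply, Pi.smul_apply, smul_eq_mul] at h
    simp [Matrix.mul_apply, h]
  have hstep : ∀ (a : ℕ) (j : Fin (k + 1)), (G.submatrix id (windowDel hn0 a j)).rank = k →
      (G.submatrix id (windowDel hn0 (a + 1) j)).rank = k := by
    intro a j h
    apply le_antisymm
    · simpa using (G.submatrix id (windowDel hn0 (a + 1) j)).rank_le_width
    · rw [hmul a j] at h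
      exact h.symm.le.trans (Matrix.rank_mul_le_right _ _)
  obtain ⟨a, ha⟩ := hwin
  have hall : ∀ b : ℕ, ∀ j : Fin (k + 1), (G.submatrix id (windowDel hn0 b j)).rank = k := by
    intro b j
    have hfwd : ∀ t : ℕ, (G.submatrix id (windowDel hn0 (a + t) j)).rank = k := by
      intro t
      induction t with
      | zero => exact ha j
      | succ t ih => exact hstep _ j ih
    -- The offset `b + n * a` gives the same window as `b` and is at least `a`.
    have hle : a ≤ b + n * a := (Nat.le_mul_of_pos_left a hn0).trans (Nat.le_add_left _ _)
    rw [← windowDel_add_mul hn0 b a j, ← Nat.add_sub_cancel' hle]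
    exact hfwd _
  refine ⟨hall, fun a _ j => ?_⟩
  rw [← Matrix.isUnit_iff_isUnit_det, ← Matrix.linearIndependent_rows_iff_isUnit,
    linearIndependent_iff_card_eq_finrank_span, Set.finrank, ← Matrix.rank_eq_finrank_span_row,
    hall, Fintype.card_fin]
end

section
/- Let F be a finite field and let g_0, g_1, …, g_{n−k} ∈ F with g_0 ≠ 0 and g_{n−k} = 1 be the coefficients of a monic polynomial g(X) = Σ_{i=0}^{n−k} g_i X^i that divides X^n − 1 in F[X] (extend by g_m = 0 for m < 0 or m > n−k). Let G be the k×n Toeplitz generator matrix of the corresponding cyclic code, with entries G_{i,j} = g_{j−i} (0-indexed). Assume: (1) for every integer j with 0 < j ≤ ⌊k/2⌋, the j×j Toeplitz matrix C_j with entries (C_j)_{r,s} = g_{n−k−1−r+s} is invertible; and (2) for every integer j with ⌊k/2⌋ < j < k, the (k−j)×(k−j) Toeplitz matrix C_j with entries (C_j)_{r,s} = g_{1+s−r} is invertible. Then G satisfies the (k,k+1)-consecutive column property. -/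
open Polynomial in
theorem coeff_mul_eq_sum_fin {F : Type*} [Field F] (P u : F[X]) (m q : ℕ)
    (hu : ∀ i, m ≤ i → u.coeff i = 0) :
    (u * P).coeff q =
      ∑ i : Fin m, u.coeff i * (if (i : ℕ) ≤ q then P.coeff (q - i) else 0) := by
  rw [Fin.sum_univ_eq_sum_range
    (fun i => u.coeff i * (if i ≤ q then P.coeff (q - i) else 0)) m, coeff_mul,
    Finset.Nat.sum_antidiagonal_eq_sum_range_succ_mk]
  -- Both sums are extended by zeros to the common range `m + q + 1`.
  trans ∑ i ∈ Finset.range (m + q + 1),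
      u.coeff i * (if i ≤ q then P.coeff (q - i) else 0)
  · rw [← Finset.sum_subset (Finset.range_mono (by omega : q + 1 ≤ m + q + 1))]
    · refine Finset.sum_congr rfl fun i hi => ?_
      rw [if_pos (by simpa [Nat.lt_succ_iff] using hi)]
    · intro i _ hi
      rw [if_neg (by simpa [Nat.lt_succ_iff] using hi), mul_zero]
  · refine (Finset.sum_subset (Finset.range_mono (by omega)) ?_).symm
    intro i _ hi
    rw [hu i (by simpa using hi), zero_mul]

open Polynomial in
/-- A polynomial `u` of degree less than `m` is determined by `m` consecutive coefficients of
`u * P` as soon as the corresponding Toeplitz matrix of coefficients of `P` is invertible. -/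
theorem eq_zero_of_toeplitz {F : Type*} [Field F] (P u : F[X]) (m e : ℕ)
    (hu : ∀ i, m ≤ i → u.coeff i = 0)
    (hz : ∀ s, s < m → (u * P).coeff (e + s) = 0)
    (hdet : IsUnit (Matrix.det (Matrix.of fun r s : Fin m =>
      if (r : ℕ) ≤ e + (s : ℕ) then P.coeff (e + (s : ℕ) - (r : ℕ)) else 0))) : u = 0 := by
  have h : (fun i : Fin m => u.coeff i) = 0 := by
    by_contra hne
    refine hdet.ne_zero (Matrix.exists_vecMul_eq_zero_iff.1 ⟨_, hne, ?_⟩)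
    ext s
    have h := hz s s.2
    rw [coeff_mul_eq_sum_fin P u m _ hu] at h
    simpa [Matrix.vecMul, dotProduct] using h
  ext i
  by_cases hi : i < m
  · simpa using congrFun h ⟨i, hi⟩
  · simpa using hu i (by omega)

open Polynomial in
/-- Multiples of a divisor `P` of `X ^ n - 1` of degree less than `n` are closed under cyclic
shifts of their coefficients. -/
theorem exists_shift {F : Type*} [Field F] {n : ℕ} (hn : 0 < n) (P : F[X])
    (hP : P ∣ X ^ n - 1) (c : F[X]) (hc : P ∣ c) (hdeg : ∀ m, n ≤ m → c.coeff m = 0) (t : ℕ) :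
    ∃ c' : F[X], P ∣ c' ∧ (∀ m, n ≤ m → c'.coeff m = 0) ∧
      ∀ m, c'.coeff ((m + t) % n) = c.coeff (m % n) := by
  induction t with
  | zero => exact ⟨c, hc, hdeg, fun m => rfl⟩
  | succ t ih =>
    obtain ⟨d, hd, hd1, hd2⟩ := ih
    have hcoeff : ∀ m, (X * d - C (d.coeff (n - 1)) * (X ^ n - 1)).coeff (m + 1) =
        d.coeff m - if m + 1 = n then d.coeff (n - 1) else 0 := by
      intro m
      simp [coeff_X_pow, coeff_one]
    refine ⟨X * d - C (d.coeff (n - 1)) * (X ^ n - 1),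
      dvd_sub (hd.mul_left _) (hP.mul_left _), ?_, ?_⟩
    · intro m hm
      obtain ⟨m, rfl⟩ : ∃ m', m = m' + 1 := ⟨m - 1, by omega⟩
      rw [hcoeff]
      split_ifs with h
      · subst h; simp
      · rw [hd1 m (by omega), sub_zero]
    · intro m
      rw [← hd2 m, ← add_assoc, ← Nat.mod_add_mod]
      have hlt := Nat.mod_lt (m + t) hn
      generalize (m + t) % n = r at hlt
      by_cases h : r + 1 = n
      · rw [h, Nat.mod_self]
        subst h
        simp
      · rw [Nat.mod_eq_of_lt (by omega), hcoeff, if_neg h, sub_zero]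

open Polynomial in
/-- A codeword vanishing on the `j` positions cyclically before `0` and the `k - j` positions
after `0`. -/
theorem eq_zero_of_zero_at_start {F : Type*} [Field F] {k n j : ℕ} (hkn : k + 1 ≤ n) (hj : j ≤ k)
    (P c : F[X]) (hdegP : P.natDegree = n - k) (hc : P ∣ c)
    (h1 : ∀ m, n - j ≤ m → c.coeff m = 0) (h2 : ∀ s, s < k - j → c.coeff (1 + s) = 0)
    (hdet : IsUnit (Matrix.det (Matrix.of fun r s : Fin (k - j) =>
      if (r : ℕ) ≤ 1 + (s : ℕ) then P.coeff (1 + (s : ℕ) - (r : ℕ)) else 0))) : c = 0 := by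
  by_contra hc0
  obtain ⟨u, rfl⟩ := hc
  obtain ⟨hP0, hu0⟩ := mul_ne_zero_iff.1 hc0
  have hlt : (P * u).natDegree < n - j := by
    by_contra! h
    exact hc0 (leadingCoeff_eq_zero.1 (h1 _ h))
  rw [natDegree_mul hP0 hu0, hdegP] at hlt
  refine hu0 (eq_zero_of_toeplitz P u (k - j) 1
    (fun i hi => coeff_eq_zero_of_natDegree_lt (by omega)) ?_ hdet)
  intro s hs
  rw [mul_comm]
  exact h2 s hs

open Polynomial in
/-- A codeword vanishing on the `j` positions before `n - 1` and the `k - j` positions cyclically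
after `n - 1`. -/
theorem eq_zero_of_zero_at_end {F : Type*} [Field F] {k n j : ℕ} (hkn : k + 1 ≤ n) (hj : j ≤ k)
    (P c : F[X]) (hdegP : P.natDegree = n - k) (hP0 : P.coeff 0 ≠ 0) (hc : P ∣ c)
    (h0 : ∀ m, n ≤ m → c.coeff m = 0)
    (h1 : ∀ s, s < k - j → c.coeff s = 0) (h2 : ∀ s, s < j → c.coeff (n - 1 - j + s) = 0)
    (hdet : IsUnit (Matrix.det (Matrix.of fun r s : Fin j =>
      if (r : ℕ) ≤ n - k - 1 + (s : ℕ) then P.coeff (n - k - 1 + (s : ℕ) - (r : ℕ)) else 0))) :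
    c = 0 := by
  by_contra hc0
  obtain ⟨u, rfl⟩ := hc
  have hX : ¬ X ∣ P := by rwa [X_dvd_iff]
  obtain ⟨w, rfl⟩ : X ^ (k - j) ∣ u :=
    prime_X.pow_dvd_of_dvd_mul_left _ hX (X_pow_dvd_iff.2 h1)
  have hPne : P ≠ 0 := (mul_ne_zero_iff.1 hc0).1
  have hw0 : w ≠ 0 := fun h => hc0 (by simp [h])
  have hlt : (P * (X ^ (k - j) * w)).natDegree < n := by
    by_contra! h
    exact hc0 (leadingCoeff_eq_zero.1 (h0 _ h))
  rw [natDegree_mul hPne (mul_ne_zero (pow_ne_zero _ X_ne_zero) hw0),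
    natDegree_mul (pow_ne_zero _ X_ne_zero) hw0, hdegP, natDegree_X_pow] at hlt
  refine hw0 (eq_zero_of_toeplitz P w j (n - k - 1)
    (fun i hi => coeff_eq_zero_of_natDegree_lt (by omega)) ?_ hdet)
  intro s hs
  have h := h2 s hs
  rwa [show P * (X ^ (k - j) * w) = X ^ (k - j) * (w * P) by ring,
    show n - 1 - j + s = (n - k - 1 + s) + (k - j) by omega, coeff_X_pow_mul] at h

/-- sufficient conditions (invertibility of certain small Toeplitz
matrices built from the generator polynomial coefficients) for the Toeplitz generator
matrix `G_{i,j} = g_{j-i}` of a cyclic code to satisfy the `(k,k+1)`-consecutive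
column property. -/
theorem stmt_7 {k n : ℕ} (F : Type*) [Field F] [Fintype F]
    (hk : 1 ≤ k) (hkn : k + 1 ≤ n) (hn0 : 0 < n)
    (g : ℕ → F) (hg0 : g 0 ≠ 0) (hmonic : g (n - k) = 1)
    (hhigh : ∀ m : ℕ, n - k < m → g m = 0)
    (hdvd : (∑ i ∈ Finset.range (n - k + 1), Polynomial.C (g i) * Polynomial.X ^ i) ∣
      (Polynomial.X ^ n - 1 : Polynomial F))
    (hC1 : ∀ j : ℕ, 0 < j → j ≤ k / 2 →
      IsUnit (Matrix.det (Matrix.of fun r s : Fin j =>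
        if (r : ℕ) ≤ n - k - 1 + (s : ℕ) then g (n - k - 1 + (s : ℕ) - (r : ℕ))
        else 0)))
    (hC2 : ∀ j : ℕ, k / 2 < j → j < k →
      IsUnit (Matrix.det (Matrix.of fun r s : Fin (k - j) =>
        if (r : ℕ) ≤ 1 + (s : ℕ) then g (1 + (s : ℕ) - (r : ℕ)) else 0))) :
    CCP hn0 (Matrix.of fun (i : Fin k) (j : Fin n) =>
      if (i : ℕ) ≤ (j : ℕ) then g ((j : ℕ) - (i : ℕ)) else 0) := by
  obtain ⟨P, hPdef⟩ : ∃ P : Polynomial F,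
      P = ∑ i ∈ Finset.range (n - k + 1), Polynomial.C (g i) * Polynomial.X ^ i := ⟨_, rfl⟩
  rw [← hPdef] at hdvd
  have hPc : ∀ m, P.coeff m = g m := by
    intro m
    simp only [hPdef, Polynomial.finsetSum_coeff, Polynomial.coeff_C_mul_X_pow,
      Finset.sum_ite_eq, Finset.mem_range]
    split_ifs with h
    · rfl
    · exact (hhigh m (by omega)).symm
  obtain rfl : g = P.coeff := funext fun m => (hPc m).symm
  have hdegP : P.natDegree = n - k :=
    Polynomial.natDegree_eq_of_le_of_coeff_ne_zero
      (Polynomial.natDegree_le_iff_coeff_eq_zero.2 hhigh) (by rw [hmonic]; exact one_ne_zero)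
  clear hPc hPdef
  intro a _ j
  generalize a * (k + 1) = off
  rw [isUnit_iff_ne_zero]
  intro hdet0
  obtain ⟨v, hv0, hv⟩ := Matrix.exists_vecMul_eq_zero_iff.2 hdet0
  -- The message polynomial of the linear relation `v` between the rows.
  set u : Polynomial F := ∑ i : Fin k, Polynomial.C (v i) * Polynomial.X ^ (i : ℕ) with hu
  have huc : ∀ i : Fin k, u.coeff i = v i := by
    intro i
    simp [hu, Polynomial.finsetSum_coeff, Polynomial.coeff_X_pow, Fin.val_inj]
  have hudeg : ∀ i, k ≤ i → u.coeff i = 0 := by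
    intro i hi
    simp only [hu, Polynomial.finsetSum_coeff, Polynomial.coeff_C_mul_X_pow]
    exact Finset.sum_eq_zero fun x _ => if_neg (by omega)
  have hcdeg : ∀ m, n ≤ m → (u * P).coeff m = 0 := by
    intro m hm
    rw [coeff_mul_eq_sum_fin P u k m hudeg]
    refine Finset.sum_eq_zero fun i _ => ?_
    split_ifs
    · rw [hhigh _ (by omega), mul_zero]
    · rw [mul_zero]
  have hzero : ∀ i, i ≤ k → i ≠ (j : ℕ) → (u * P).coeff ((off + i) % n) = 0 := by
    intro i hi hij
    obtain ⟨m, hm⟩ := Fin.exists_succAbove_eq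
      (show (⟨i, by omega⟩ : Fin (k + 1)) ≠ j from fun h => hij (by rw [← h]))
    have h := congrFun hv m
    rw [coeff_mul_eq_sum_fin P u k _ hudeg]
    simpa [Matrix.vecMul, dotProduct, windowDel, hm, huc] using h
  have hjk : (j : ℕ) ≤ k := by omega
  generalize (j : ℕ) = j at hzero hjk
  suffices hc0 : u * P = 0 by
    have hPne : P ≠ 0 := fun h => hg0 (by simp [h])
    have hu0 : u = 0 := (mul_eq_zero.1 hc0).resolve_right hPne
    exact hv0 (funext fun i => by rw [← huc i, hu0]; simp)
  -- It is enough that some cyclic shift of the codeword vanishes.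
  have hback : ∀ (t : ℕ) (c : Polynomial F),
      (∀ m, c.coeff ((m + t) % n) = (u * P).coeff (m % n)) → c = 0 → u * P = 0 := by
    intro t c hct h0
    ext m
    by_cases hm : m < n
    · have := hct m
      rw [h0, Nat.mod_eq_of_lt hm] at this
      simpa using this.symm
    · simpa using hcdeg m (by omega)
  by_cases hjc : k / 2 < j
  · -- This shift sends position `off + j` to `0` modulo `n`.
    obtain ⟨q, hq⟩ : ∃ q, q = n * (off + j) - (off + j) := ⟨_, rfl⟩
    have hle : off + j ≤ n * (off + j) := Nat.le_mul_of_pos_left _ hn0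
    obtain ⟨c, hPc, hc1, hc2⟩ := exists_shift hn0 P hdvd (u * P) (dvd_mul_left _ _) hcdeg (q + n)
    refine hback _ c hc2 (eq_zero_of_zero_at_start hkn hjk P c hdegP hPc ?_ ?_ ?_)
    · intro m hm
      by_cases hmn : n ≤ m
      · exact hc1 m hmn
      have h := hc2 (off + (m + j - n))
      rw [hzero _ (by omega) (by omega),
        show off + (m + j - n) + (q + n) = m + n * (off + j) by omega,
        Nat.add_mul_mod_self_left, Nat.mod_eq_of_lt (by omega)] at h
      exact h
    · intro s hs
      have h := hc2 (off + (j + 1 + s))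
      rw [hzero _ (by omega) (by omega),
        show off + (j + 1 + s) + (q + n) = 1 + s + n + n * (off + j) by omega,
        Nat.add_mul_mod_self_left, Nat.add_mod_right, Nat.mod_eq_of_lt (by omega)] at h
      exact h
    · rcases hjk.lt_or_eq with h | h
      · exact hC2 j hjc h
      · have : IsEmpty (Fin (k - j)) := by rw [h, Nat.sub_self]; infer_instance
        rw [Matrix.det_isEmpty]
        exact isUnit_one
  · -- This shift sends position `off + j` to `n - 1` modulo `n`.
    obtain ⟨q, hq⟩ : ∃ q, q = n * (off + j) - (off + j) := ⟨_, rfl⟩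
    have hle : off + j ≤ n * (off + j) := Nat.le_mul_of_pos_left _ hn0
    obtain ⟨c, hPc, hc1, hc2⟩ :=
      exists_shift hn0 P hdvd (u * P) (dvd_mul_left _ _) hcdeg (q + (n - 1))
    refine hback _ c hc2 (eq_zero_of_zero_at_end hkn hjk P c hdegP hg0 hPc hc1 ?_ ?_ ?_)
    · intro s hs
      have h := hc2 (off + (j + 1 + s))
      rw [hzero _ (by omega) (by omega),
        show off + (j + 1 + s) + (q + (n - 1)) = s + n + n * (off + j) by omega,
        Nat.add_mul_mod_self_left, Nat.add_mod_right, Nat.mod_eq_of_lt (by omega)] at h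
      exact h
    · intro s hs
      have h := hc2 (off + s)
      rw [hzero _ (by omega) (by omega),
        show off + s + (q + (n - 1)) = n - 1 - j + s + n * (off + j) by omega,
        Nat.add_mul_mod_self_left, Nat.mod_eq_of_lt (by omega)] at h
      exact h
    · rcases Nat.eq_zero_or_pos j with rfl | h
      · rw [Matrix.det_isEmpty]
        exact isUnit_one
      · exact hC1 j h (by omega)
end

section
/- Let F be a field and let A be a z×α matrix over F satisfying the (z,z)-consecutive column property, i.e., letting z′ be the least positive integer such that z divides αz′, for every 0 ≤ a ≤ αz′/z − 1 the z columns of A indexed by {(az+i) mod α : 0 ≤ i ≤ z−1} are linearly independent. Let t ≥ 1 and set G = A ⊗ I_t (the Kronecker product with the t×t identity matrix), a k×n matrix with k = tz and n = tα. Then G satisfies the (k,k)-consecutive column property: letting z″ be the least positive integer such that k divides nz″, for every 0 ≤ a ≤ nz″/k − 1 the k columns of G indexed by {(ak+i) mod n : 0 ≤ i ≤ k−1} are linearly independent. -/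
/-!
In the windows of `G = A ⊗ I_t`, an index `i = s + t q` of `Fin (z * t)` selects the column
`(a (z t) + i) mod (α t) = s + t ((a z + q) mod α)`, because both the start of the window and the
modulus are multiples of `t` (`window_index`). Hence column `(q, s)` of the window is the `q`-th
column of the `a`-th window of `A`, placed in the rows congruent to `s` modulo `t`. Restricting a
linear relation among the columns of `G` to those rows gives, for each `s`, a linear relation
among the columns of that window of `A`, so all coefficients vanish. The range of `a` is the same
for `A` and `G` since `z t ∣ α t w ↔ z ∣ α w` and `α t w / (z t) = α w / z`.
-/

/-- The `(k,α)`-consecutive column property for a `k × n` matrix over a field: for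
every window `S_a^α = {(aα+i) mod n : 0 ≤ i ≤ α-1}` with `0 ≤ a < n·z/α`, where `z`
is the least positive integer such that `α ∣ n z`, the `α` columns of `G` indexed by
`S_a^α` are linearly independent. -/
def kACCP (F : Type*) [Field F] {k n : ℕ} (hn : 0 < n) (α : ℕ)
    (G : Matrix (Fin k) (Fin n) F) : Prop :=
  ∀ a : ℕ, a < n * sInf {z : ℕ | 0 < z ∧ α ∣ n * z} / α →
    LinearIndependent F (fun i : Fin α => fun r : Fin k =>
      G r ⟨(a * α + (i : ℕ)) % n, Nat.mod_lt _ hn⟩)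

theorem window_index {z α t : ℕ} (a q : ℕ) {s : ℕ} (hs : s < t) :
    (a * (z * t) + (s + t * q)) % (α * t) = s + t * ((a * z + q) % α) := by
  have e : a * (z * t) + (s + t * q) = s + t * (a * z + q) := by ring
  have ht : 0 < t := by omega
  rw [e, mul_comm α t, Nat.mod_mul, Nat.add_mul_mod_self_left, Nat.mod_eq_of_lt hs,
    Nat.add_mul_div_left _ _ ht, Nat.div_eq_of_lt hs, zero_add]

/-- if a `z × α` matrix `A` satisfies the `(z,z)`-consecutive column
property, then the Kronecker product `G = A ⊗ I_t` (a `(zt) × (αt)` matrix, with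
rows/columns listed blockwise) satisfies the `(tz,tz)`-consecutive column
property. -/
theorem stmt_8 (F : Type*) [Field F] {z α t : ℕ}
    (hz : 0 < z) (hα : 0 < α) (ht : 0 < t)
    (A : Matrix (Fin z) (Fin α) F)
    (hA : kACCP F hα z A) :
    kACCP F (Nat.mul_pos hα ht) (z * t)
      ((Matrix.reindex finProdFinEquiv finProdFinEquiv)
        (Matrix.kroneckerMap (· * ·) A (1 : Matrix (Fin t) (Fin t) F))) := by
  intro a ha
  have hset : {w : ℕ | 0 < w ∧ z * t ∣ α * t * w} = {w : ℕ | 0 < w ∧ z ∣ α * w} := by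
    ext w
    simp only [Set.mem_ofPred_eq, mul_right_comm α t w, Nat.mul_dvd_mul_iff_right ht]
  rw [hset, mul_right_comm, Nat.mul_div_mul_right _ _ ht] at ha
  have hlin := Fintype.linearIndependent_iff.1 (hA a ha)
  rw [Fintype.linearIndependent_iff]
  intro g hg i
  obtain ⟨⟨q, s⟩, rfl⟩ := finProdFinEquiv.surjective i
  refine hlin (fun q => g (finProdFinEquiv (q, s))) ?_ q
  funext p
  -- Evaluate the relation in row `(p, s)`, where only the columns `(q', s)` are nonzero.
  have hrow := congrFun hg (finProdFinEquiv (p, s))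
  rw [← finProdFinEquiv.sum_comp, Fintype.sum_prod_type] at hrow
  simp only [Finset.sum_apply, Pi.smul_apply, smul_eq_mul, Pi.zero_apply] at hrow ⊢
  rw [← hrow]
  refine Finset.sum_congr rfl fun q' _ => ?_
  have hcol (s' : Fin t) :
      (⟨(a * (z * t) + (finProdFinEquiv (q', s') : ℕ)) % (α * t),
          Nat.mod_lt _ (Nat.mul_pos hα ht)⟩ : Fin (α * t)) =
        finProdFinEquiv (⟨(a * z + (q' : ℕ)) % α, Nat.mod_lt _ hα⟩, s') :=
    Fin.ext (window_index a q' s'.2)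
  simp only [hcol]
  simp [Matrix.one_apply, -finProdFinEquiv_apply_val]
end

section
/- Let z ≥ 2 and t ≥ 1 be integers, and set n = (z+1)t and k = zt − 1 (so t = n−k−1 and nz = (z+1)(k+1)). Let F be a finite field with q ≥ z elements, let b_1, …, b_{z−1} ∈ F be nonzero and pairwise distinct, and let c_1, c_2 ∈ F with c_1 ≠ 0 and c_1 + c_2 = 0. Define the k×n matrix G blockwise with row blocks r = 1, …, z−1 of height t and a bottom row block of height t−1, and column blocks: for c = 1, …, z−1, a width-t block equal to I_t in row block r = c and zero elsewhere; a width-(t−1) block equal to zero in row blocks 1, …, z−1 and to I_{t−1} in the bottom row block; a single column of all ones; and a final width-t block equal to b_r · I_t in row block r and to C(c_1, c_2)_{(t−1)×t} in the bottom row block. Then G satisfies the (k,k+1)-consecutive column property. -/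
/-! ### Linear algebra of the kernel -/

/-- A column submatrix is invertible if no nonzero kernel vector is supported on the chosen
columns. -/
lemma isUnit_det_of_ker {F : Type*} [Field F] {k n : ℕ} (G : Matrix (Fin k) (Fin n) F)
    (w : Fin k → Fin n) (hw : Function.Injective w)
    (h : ∀ x : Fin n → F, (∀ c, (∀ m, w m ≠ c) → x c = 0) →
      (∀ r, ∑ c, G r c * x c = 0) → ∀ c, x c = 0) :
    IsUnit (G.submatrix id w).det := by
  rw [isUnit_iff_ne_zero]
  intro h0
  obtain ⟨v, hv, hMv⟩ := Matrix.exists_mulVec_eq_zero_iff.mpr h0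
  apply hv
  -- extend `v` by zero to all columns
  set x : Fin n → F := fun c => ∑ m, if w m = c then v m else 0 with hx
  have hxw : ∀ m, x (w m) = v m := by
    intro m
    simp [hx, hw.eq_iff]
  have hall := h x ?_ ?_
  · funext m
    rw [← hxw m, hall]
    rfl
  · intro c hc
    simp [hx, hc]
  · intro r
    have := congrFun hMv r
    simp only [Matrix.mulVec, dotProduct, Matrix.submatrix_apply, id, Pi.zero_apply] at this
    rw [← this]
    simp only [hx, Finset.mul_sum]
    rw [Finset.sum_comm]
    apply Finset.sum_congr rfl
    intro m _
    simp

/-- The linear algebra of the kernel, with `Y r s` the coordinate at column `r * t + s` and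
`z = y + 1`, so that `Y y (t - 1)` belongs to the all-ones column and block `y + 1` is the last
one. A kernel vector vanishing on block `d` and at one position outside it is zero. -/
lemma kernel_trivial {F : Type*} [Field F] {y t : ℕ} (ht : 0 < t) (B : ℕ → F)
    (hB0 : ∀ r < y, B r ≠ 0) (hB : ∀ r < y, ∀ r' < y, B r = B r' → r = r')
    (c1 : F) (hc1 : c1 ≠ 0) (Y : ℕ → ℕ → F)
    (R1 : ∀ r < y, ∀ s < t, Y r s + Y y (t - 1) + B r * Y (y + 1) s = 0)
    (R2 : ∀ s, s + 1 < t →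
      Y y s + Y y (t - 1) + c1 * (Y (y + 1) s - Y (y + 1) (s + 1)) = 0)
    (d : ℕ) (hd : d ≤ y + 1) (hYd : ∀ s < t, Y d s = 0)
    (r0 s0 : ℕ) (hr0 : r0 ≤ y + 1) (hs0 : s0 < t) (hrd : r0 ≠ d) (hY0 : Y r0 s0 = 0) :
    ∀ r ≤ y + 1, ∀ s < t, Y r s = 0 := by
  set u := Y y (t - 1) with hu
  have cases3 : ∀ r ≤ y + 1, r < y ∨ r = y ∨ r = y + 1 := by intro r hr; omega
  have hW : ∀ s < t, Y (y + 1) s = Y (y + 1) 0 := by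
    rcases cases3 d hd with h | rfl | rfl
    · intro s hs
      have e1 := R1 d h s hs
      have e2 := R1 d h 0 ht
      rw [hYd s hs] at e1
      rw [hYd 0 ht] at e2
      exact mul_left_cancel₀ (hB0 d h) (by linear_combination e1 - e2)
    · have hu0 : u = 0 := hYd _ (by omega)
      intro s
      induction s with
      | zero => intro _; rfl
      | succ s ih =>
        intro hs
        rw [← ih (by omega)]
        have e := R2 s hs
        rw [hYd s (by omega), hu0] at e
        exact mul_left_cancel₀ hc1 (by linear_combination -e)
    · intro s hs
      rw [hYd s hs, hYd 0 ht]
  set W := Y (y + 1) 0 with hWdef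
  have R1' : ∀ r < y, ∀ s < t, Y r s = -(u + B r * W) := by
    intro r hr s hs
    have := R1 r hr s hs
    rw [hW s hs] at this
    linear_combination this
  have R2' : ∀ s, s + 1 < t → Y y s = -u := by
    intro s hs
    have := R2 s hs
    rw [hW s (by omega), hW (s + 1) hs] at this
    linear_combination this
  -- the relation between `u` and `W` given by one vanishing coordinate in block `r`
  have rel : ∀ r ≤ y + 1, ∀ s < t, Y r s = 0 →
      (r < y ∧ u + B r * W = 0) ∨ (r = y ∧ u = 0) ∨ (r = y + 1 ∧ W = 0) := by
    intro r hr s hs h0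
    rcases cases3 r hr with h | rfl | rfl
    · left
      refine ⟨h, ?_⟩
      rw [R1' r h s hs] at h0
      exact neg_eq_zero.mp h0
    · right; left
      refine ⟨rfl, ?_⟩
      by_cases hs1 : s + 1 < t
      · rw [R2' s hs1] at h0
        exact neg_eq_zero.mp h0
      · have : s = t - 1 := by omega
        rw [hu, ← this, h0]
    · right; right
      exact ⟨rfl, by rw [← hW s hs, h0]⟩
  have key : u = 0 ∧ W = 0 := by
    rcases rel d hd 0 ht (hYd 0 ht) with ⟨h, e⟩ | ⟨h, e⟩ | ⟨h, e⟩ <;>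
    rcases rel r0 hr0 s0 hs0 hY0 with ⟨h', e'⟩ | ⟨h', e'⟩ | ⟨h', e'⟩
    · have hne : B r0 - B d ≠ 0 := fun h0 => hrd (hB r0 h' d h (sub_eq_zero.mp h0))
      have hW0 : W = 0 := by
        have : (B r0 - B d) * W = 0 := by linear_combination e' - e
        exact (mul_eq_zero.mp this).resolve_left hne
      exact ⟨by rw [hW0] at e; simpa using e, hW0⟩
    · rw [e', zero_add] at e
      exact ⟨e', (mul_eq_zero.mp e).resolve_left (hB0 d h)⟩
    · rw [e'] at e
      exact ⟨by simpa using e, e'⟩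
    · rw [e, zero_add] at e'
      exact ⟨e, (mul_eq_zero.mp e').resolve_left (hB0 r0 h')⟩
    · omega
    · exact ⟨e, e'⟩
    · rw [e] at e'
      exact ⟨by simpa using e', e⟩
    · exact ⟨e', e⟩
    · omega
  obtain ⟨hu0, hW0⟩ := key
  intro r hr s hs
  rcases cases3 r hr with h | rfl | rfl
  · rw [R1' r h s hs, hu0, hW0]; simp
  · by_cases hs1 : s + 1 < t
    · rw [R2' s hs1, hu0, neg_zero]
    · have : s = t - 1 := by omega
      rw [this, ← hu, hu0]
  · rw [hW s hs, hW0]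

/-! ### Arithmetic of the windows -/

/-- The hypotheses `n = (z + 1) t`, `k + 1 = z t` determine the period of the windows. -/
lemma leastZ_eq {z t n k : ℕ} (hz : 2 ≤ z) (ht : 0 < t) (hn : n = (z + 1) * t)
    (hk : k + 1 = z * t) : leastZ k n = z := by
  have hset : ∀ x, (k + 1) ∣ n * x ↔ z ∣ x := by
    intro x
    rw [hk, hn, show (z + 1) * t * x = ((z + 1) * x) * t by ring,
      Nat.mul_dvd_mul_iff_right ht]
    exact (Nat.coprime_self_add_right.mpr (Nat.coprime_one_right z)).dvd_mul_left
  unfold leastZ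
  simp only [hset]
  apply le_antisymm
  · exact Nat.sInf_le ⟨by omega, dvd_rfl⟩
  · obtain ⟨h1, h2⟩ := Nat.sInf_mem (s := {x : ℕ | 0 < x ∧ z ∣ x}) ⟨z, by omega, dvd_rfl⟩
    exact Nat.le_of_dvd h1 h2

/-- The window with index `a` is obtained by walking on from the end of block `z - a`. -/
lemma window_mod {z t n a i : ℕ} (hn : n = (z + 1) * t) (ha : a ≤ z) :
    (a * (z * t) + i) % n = ((z - a + 1) * t + i) % n := by
  obtain ⟨d, rfl⟩ := Nat.exists_eq_add_of_le ha
  have e : a + d - a = d := by omega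
  rw [e, ← Nat.add_mod_right (a * ((a + d) * t) + i) n,
    show a * ((a + d) * t) + i + n = ((d + 1) * t + i) + n * a by rw [hn]; ring,
    Nat.add_mul_mod_self_left]

/-- Walking on for `z t` columns from the end of block `d` never returns to block `d`. -/
lemma window_avoid {z t n d i : ℕ} (hn : n = (z + 1) * t) (hd : d ≤ z) (hi : i < z * t) :
    ((d + 1) * t + i) % n < d * t ∨ (d + 1) * t ≤ ((d + 1) * t + i) % n := by
  have h1 : (d + 1) * t ≤ (z + 1) * t := Nat.mul_le_mul_right t (by omega)
  rw [add_one_mul] at *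
  rcases lt_or_ge (d * t + t + i) n with h | h
  · right
    rw [Nat.mod_eq_of_lt h]; omega
  · left
    rw [Nat.mod_eq_sub_mod h, Nat.mod_eq_of_lt] <;> nlinarith [Nat.sub_add_cancel h]

/-! ### The consecutive column property -/

/-- the construction for `α = z+1`.  With `n = (z+1)t`, `k+1 = zt`,
`b 0, …, b (z-2)` nonzero pairwise distinct elements of a finite field `F` with at
least `z` elements and `c₁ ≠ 0`, `c₁ + c₂ = 0`, the block matrix
`G = [blockdiag(I_t,…,I_t,I_{t-1}) | 1 | (b_r I_t ; C(c₁,c₂))]` (identity blocks in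
the first `(z-1)t + (t-1)` columns, an all-ones column, and a final width-`t` block
equal to `b_r · I_t` on row block `r` and `C(c₁,c₂)_{(t-1)×t}` on the bottom row
block) satisfies the `(k,k+1)`-consecutive column property. -/
theorem stmt_10 {z t n k : ℕ} (F : Type*) [Field F] [Fintype F]
    (hz : 2 ≤ z) (ht : 0 < t) (hn : n = (z + 1) * t) (hk : k + 1 = z * t)
    (hq : z ≤ Fintype.card F)
    (b : Fin (z - 1) → F) (hb0 : ∀ i, b i ≠ 0) (hbinj : Function.Injective b)
    (c1 c2 : F) (hc1 : c1 ≠ 0) (hcsum : c1 + c2 = 0)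
    (hn0 : 0 < n)
    (G : Matrix (Fin k) (Fin n) F)
    (hG : ∀ (m : Fin k) (c : Fin n),
      G m c =
        if (c : ℕ) < k then (if (m : ℕ) = (c : ℕ) then 1 else 0)
        else if (c : ℕ) = k then 1
        else
          if hm : (m : ℕ) < (z - 1) * t then
            b ⟨(m : ℕ) / t, (Nat.div_lt_iff_lt_mul ht).mpr hm⟩ *
              (if (m : ℕ) % t = (c : ℕ) - z * t then 1 else 0)
          else
            (if (c : ℕ) - z * t = (m : ℕ) - (z - 1) * t then c1
             else if (c : ℕ) - z * t = (m : ℕ) - (z - 1) * t + 1 then c2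
             else 0)) :
    CCP hn0 G := by
  obtain ⟨y, rfl⟩ : ∃ y, z = y + 1 := ⟨z - 1, by omega⟩
  change Fin y → F at b
  simp only [Nat.add_sub_cancel] at hG
  have hkn : k + 1 + t = n := by rw [hn, hk]; ring
  intro a ha j
  have hay : a ≤ y + 1 := by
    rw [leastZ_eq hz ht hn hk, hn, hk,
      show (y + 1 + 1) * t * (y + 1) = (y + 2) * ((y + 1) * t) by ring,
      Nat.mul_div_cancel _ (by positivity)] at ha
    omega
  -- the `k + 1 ≤ n` columns of a window are pairwise distinct
  have hinj : ∀ i i' : ℕ, i < k + 1 → i' < k + 1 →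
      (a * (k + 1) + i) % n = (a * (k + 1) + i') % n → i = i' := by
    intro i i' hi hi' h
    exact Nat.ModEq.eq_of_lt_of_lt (Nat.ModEq.add_left_cancel' _ h) (by omega) (by omega)
  apply isUnit_det_of_ker
  · intro m m' h
    have := hinj _ _ (j.succAbove m).2 (j.succAbove m').2 (congrArg Fin.val h)
    exact Fin.succAbove_right_injective (Fin.ext this)
  intro x hx0 hker
  set d := y + 1 - a with hd
  set X : ℕ → F := fun i => if h : i < n then x ⟨i, h⟩ else 0 with hX
  have hXx : ∀ c : Fin n, X c = x c := fun c => by simp [hX]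
  have hwin : ∀ i, (a * (k + 1) + i) % n = ((d + 1) * t + i) % n := fun i => by
    rw [hk]; exact window_mod hn hay
  have hlt : ∀ r ≤ y + 1, ∀ s < t, r * t + s < n := by
    intro r hr s hs
    have : r * t ≤ (y + 1) * t := Nat.mul_le_mul_right t hr
    omega
  have hdm : ∀ r s, s < t → (r * t + s) / t = r ∧ (r * t + s) % t = s := by
    intro r s hs
    rw [mul_comm, Nat.mul_add_div ht, Nat.div_eq_of_lt hs, Nat.mul_add_mod,
      Nat.mod_eq_of_lt hs]
    simp
  have hkt : k = y * t + (t - 1) := by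
    have : k + 1 = y * t + t := by rw [hk]; ring
    omega
  have hzt : (y + 1) * t = k + 1 := hk.symm
  -- the rows of block `r < y`, then the rows of the bottom block, as linear relations
  have row1 : ∀ r (hr : r < y), ∀ s < t,
      X (r * t + s) + X k + b ⟨r, hr⟩ * X ((y + 1) * t + s) = 0 := by
    intro r hr s hs
    have hm : r * t + s < y * t := by nlinarith
    have hmk : r * t + s < k := by omega
    have e := hker ⟨r * t + s, hmk⟩
    have hGe : ∀ c : Fin n, G ⟨r * t + s, hmk⟩ c * x c =
        (if c = ⟨r * t + s, by omega⟩ then X c else 0) +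
        (if c = ⟨k, by omega⟩ then X c else 0) +
        (if c = ⟨(y + 1) * t + s, by omega⟩ then
          b ⟨r, hr⟩ * X c else 0) := by
      intro c
      rw [hG]
      simp only [hm, dif_pos, (hdm r s hs).1, (hdm r s hs).2, hzt, Fin.ext_iff, ← hXx c]
      split_ifs <;> first | omega | ring
    rw [Finset.sum_congr rfl fun c _ => hGe c] at e
    simpa [Finset.sum_add_distrib] using e
  have row2 : ∀ s, s + 1 < t →
      X (y * t + s) + X k + c1 * (X ((y + 1) * t + s) - X ((y + 1) * t + (s + 1))) = 0 := by
    intro s hs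
    have hmk : y * t + s < k := by omega
    have hm : ¬ (y * t + s < y * t) := by omega
    have hms : y * t + s - y * t = s := by omega
    have e := hker ⟨y * t + s, hmk⟩
    have hc2 : c2 = -c1 := by linear_combination hcsum
    have hGe : ∀ c : Fin n, G ⟨y * t + s, hmk⟩ c * x c =
        (if c = ⟨y * t + s, by omega⟩ then X c else 0) +
        (if c = ⟨k, by omega⟩ then X c else 0) +
        (if c = ⟨(y + 1) * t + s, by omega⟩ then c1 * X c else 0) +
        (if c = ⟨(y + 1) * t + (s + 1), by omega⟩ then
          -c1 * X c else 0) := by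
      intro c
      rw [hG]
      simp only [hm, dif_neg, not_false_eq_true, hms, hzt, Fin.ext_iff, ← hXx c, hc2]
      split_ifs <;> first | omega | ring
    rw [Finset.sum_congr rfl fun c _ => hGe c] at e
    simp only [Finset.sum_add_distrib, Finset.sum_ite_eq', Finset.mem_univ, if_true] at e
    linear_combination e
  -- the deleted column `q` lies in the window, hence outside block `d`
  set q := (a * (k + 1) + (j : ℕ)) % n with hq'
  have hqn : q < n := Nat.mod_lt _ hn0
  have hXq : X q = 0 := by
    have : x ⟨q, hqn⟩ = 0 := by
      apply hx0
      intro m h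
      have := hinj _ _ (j.succAbove m).2 j.2 (congrArg Fin.val h)
      exact Fin.succAbove_ne j m (Fin.ext this)
    rw [← this]; exact hXx ⟨q, hqn⟩
  have hXd : ∀ s < t, X (d * t + s) = 0 := by
    intro s hs
    have hl := hlt d (by omega) s hs
    have : x ⟨d * t + s, hl⟩ = 0 := by
      apply hx0
      intro m h
      have h1 : (a * (k + 1) + ((j.succAbove m : Fin (k + 1)) : ℕ)) % n = d * t + s :=
        congrArg Fin.val h
      rw [hwin] at h1
      have h2 := window_avoid (i := ((j.succAbove m : Fin (k + 1)) : ℕ)) hn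
        (show d ≤ y + 1 by omega) (by rw [← hk]; exact (j.succAbove m).2)
      rw [h1, add_one_mul] at h2
      omega
    rw [← this]; exact hXx ⟨_, hl⟩
  have hqdiv : q / t ≠ d := by
    intro h
    have h2 := window_avoid (i := (j : ℕ)) hn (show d ≤ y + 1 by omega)
      (by rw [← hk]; exact j.2)
    rw [← hwin, ← hq', add_one_mul] at h2
    have h3 := Nat.div_add_mod q t
    have h4 := Nat.mod_lt q ht
    rw [h, mul_comm] at h3
    omega
  have hdivle : ∀ q < n, q / t ≤ y + 1 := by
    intro q hq
    rw [hn] at hq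
    exact Nat.lt_succ_iff.mp ((Nat.div_lt_iff_lt_mul ht).mpr hq)
  have hsplit : ∀ q, q / t * t + q % t = q := fun q => by
    rw [mul_comm]; exact Nat.div_add_mod q t
  have hfin := kernel_trivial ht (fun r => if h : r < y then b ⟨r, h⟩ else 0)
    (fun r hr => by simpa [hr] using hb0 ⟨r, hr⟩)
    (fun r hr r' hr' h => by
      simp only [hr, hr', dif_pos] at h
      exact congrArg Fin.val (hbinj h))
    c1 hc1 (fun r s => X (r * t + s))
    (fun r hr s hs => by
      simp only [hr, dif_pos, ← hkt]
      exact row1 r hr s hs)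
    (fun s hs => by
      simp only [← hkt]
      exact row2 s hs)
    d (by omega) hXd (q / t) (q % t) (hdivle q hqn) (Nat.mod_lt _ ht) hqdiv
    (by simp only [hsplit]; exact hXq)
  intro c
  rw [← hXx c, ← hsplit c]
  exact hfin _ (hdivle c c.2) _ (Nat.mod_lt _ ht)
end

section
/- Let q ≥ 2 and t ≥ 1 be integers, set k = 2t−1 and n = 3t, and define the k×n block matrix over ℤ/qℤ: G = [[I_t, 0_{t×(t−1)}, 1_t, I_t], [0_{(t−1)×t}, I_{t−1}, 1_{t−1}, C(1,−1)_{(t−1)×t}]], where 1_a is the all-ones column of height a. Then G satisfies the (k,k+1)-consecutive column property over ℤ/qℤ: for each of the three windows of 2t cyclically consecutive columns S_0 = {0,…,2t−1}, S_1 = {2t,…,3t−1} ∪ {0,…,t−1}, S_2 = {t,…,3t−1}, and for each j in the window, the k×k submatrix of G with columns indexed by the window minus {j} has determinant a unit of ℤ/qℤ. -/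
/-- The entry of the block matrix `G` in row `m` and column `c`, with natural-number indices. -/
def blockEntry (R : Type*) [CommRing R] (t m c : ℕ) : R :=
  if m < t then
    (if c < t then (if m = c then 1 else 0)
     else if c < 2 * t - 1 then 0
     else if c = 2 * t - 1 then 1
     else if m = c - 2 * t then 1 else 0)
  else
    (if c < t then 0
     else if c < 2 * t - 1 then
       (if c - t = m - t then 1 else 0)
     else if c = 2 * t - 1 then 1
     else if c - 2 * t = m - t then 1
     else if c - 2 * t = m - t + 1 then -1
     else 0)

section Kernel

variable {R : Type*} [CommRing R] {t : ℕ} {w : ℕ → R}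

/-- The window `[I | 1]`. -/
lemma exists_sign_zero (ht : 0 < t)
    (h : ∀ m < 2 * t - 1,
      ∑ i ∈ Finset.range (2 * t), blockEntry R t m ((0 + i) % (3 * t)) * w i = 0) :
    ∃ c : R, ∀ i < 2 * t, w i = c ∨ w i = -c := by
  have row : ∀ m < 2 * t - 1, w m + w (2 * t - 1) = 0 := by
    intro m hm
    have e : ∀ i ∈ Finset.range (2 * t), blockEntry R t m ((0 + i) % (3 * t)) * w i
        = (if i = m then w i else 0) + (if i = 2 * t - 1 then w i else 0) := by
      intro i hi
      rw [Finset.mem_range] at hi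
      rw [Nat.mod_eq_of_lt (by omega)]
      unfold blockEntry
      split_ifs <;> first | omega | simp
    have := h m hm
    rw [Finset.sum_congr rfl e, Finset.sum_add_distrib, Finset.sum_ite_eq', Finset.sum_ite_eq',
      if_pos (Finset.mem_range.2 (by omega)), if_pos (Finset.mem_range.2 (by omega))] at this
    exact this
  refine ⟨w (2 * t - 1), fun i hi => ?_⟩
  by_cases hi' : i = 2 * t - 1
  · exact Or.inl (by rw [hi'])
  · exact Or.inr (eq_neg_of_add_eq_zero_left (row i (by omega)))

/-- The window `[I, I; C(1,-1), 0]`. -/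
lemma exists_sign_one
    (h : ∀ m < 2 * t - 1,
      ∑ i ∈ Finset.range (2 * t), blockEntry R t m ((2 * t + i) % (3 * t)) * w i = 0) :
    ∃ c : R, ∀ i < 2 * t, w i = c ∨ w i = -c := by
  -- The columns `2t, …, 3t-1` come first; the indices then wrap around to `0, …, t-1`.
  have hmod : ∀ i < 2 * t, (2 * t + i) % (3 * t) = if i < t then 2 * t + i else i - t := by
    intro i hi
    split_ifs
    · exact Nat.mod_eq_of_lt (by omega)
    · rw [Nat.mod_eq_sub_mod (by omega), Nat.mod_eq_of_lt (by omega)]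
      omega
  have top : ∀ m < t, w m + w (t + m) = 0 := by
    intro m hm
    have e : ∀ i ∈ Finset.range (2 * t), blockEntry R t m ((2 * t + i) % (3 * t)) * w i
        = (if i = m then w i else 0) + (if i = t + m then w i else 0) := by
      intro i hi
      rw [Finset.mem_range] at hi
      rw [hmod i hi]
      unfold blockEntry
      split_ifs <;> first | omega | simp
    have := h m (by omega)
    rw [Finset.sum_congr rfl e, Finset.sum_add_distrib, Finset.sum_ite_eq', Finset.sum_ite_eq',
      if_pos (Finset.mem_range.2 (by omega)), if_pos (Finset.mem_range.2 (by omega))] at this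
    exact this
  have bot : ∀ r, r + 1 < t → w r - w (r + 1) = 0 := by
    intro r hr
    have e : ∀ i ∈ Finset.range (2 * t), blockEntry R t (t + r) ((2 * t + i) % (3 * t)) * w i
        = (if i = r then w i else 0) - (if i = r + 1 then w i else 0) := by
      intro i hi
      rw [Finset.mem_range] at hi
      rw [hmod i hi]
      unfold blockEntry
      split_ifs <;> first | omega | simp
    have := h (t + r) (by omega)
    rw [Finset.sum_congr rfl e, Finset.sum_sub_distrib, Finset.sum_ite_eq', Finset.sum_ite_eq',
      if_pos (Finset.mem_range.2 (by omega)), if_pos (Finset.mem_range.2 (by omega))] at this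
    exact this
  have const : ∀ r < t, w r = w 0 := by
    intro r
    induction r with
    | zero => intro _; rfl
    | succ r ih => intro hr; rw [← sub_eq_zero.1 (bot r hr)]; exact ih (by omega)
  refine ⟨w 0, fun i hi => ?_⟩
  by_cases hi' : i < t
  · exact Or.inl (const i hi')
  · have := top (i - t) (by omega)
    rw [const (i - t) (by omega), show t + (i - t) = i by omega] at this
    exact Or.inr (eq_neg_of_add_eq_zero_right this)

/-- The window `[0, 1, I; I, 1, C(1,-1)]`. -/
lemma exists_sign_two
    (h : ∀ m < 2 * t - 1,
      ∑ i ∈ Finset.range (2 * t), blockEntry R t m ((4 * t + i) % (3 * t)) * w i = 0) :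
    ∃ c : R, ∀ i < 2 * t, w i = c ∨ w i = -c := by
  have hmod : ∀ i < 2 * t, (4 * t + i) % (3 * t) = t + i := by
    intro i hi
    rw [Nat.mod_eq_sub_mod (by omega), Nat.mod_eq_of_lt (by omega)]
    omega
  have top : ∀ m < t, w (t - 1) + w (t + m) = 0 := by
    intro m hm
    have e : ∀ i ∈ Finset.range (2 * t), blockEntry R t m ((4 * t + i) % (3 * t)) * w i
        = (if i = t - 1 then w i else 0) + (if i = t + m then w i else 0) := by
      intro i hi
      rw [Finset.mem_range] at hi
      rw [hmod i hi]
      unfold blockEntry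
      split_ifs <;> first | omega | simp
    have := h m (by omega)
    rw [Finset.sum_congr rfl e, Finset.sum_add_distrib, Finset.sum_ite_eq', Finset.sum_ite_eq',
      if_pos (Finset.mem_range.2 (by omega)), if_pos (Finset.mem_range.2 (by omega))] at this
    exact this
  have bot : ∀ r, r + 1 < t →
      w r + w (t - 1) + (w (t + r) - w (t + r + 1)) = 0 := by
    intro r hr
    have e : ∀ i ∈ Finset.range (2 * t), blockEntry R t (t + r) ((4 * t + i) % (3 * t)) * w i
        = (if i = r then w i else 0) + (if i = t - 1 then w i else 0)
          + ((if i = t + r then w i else 0) - (if i = t + r + 1 then w i else 0)) := by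
      intro i hi
      rw [Finset.mem_range] at hi
      rw [hmod i hi]
      unfold blockEntry
      split_ifs <;> first | omega | simp
    have := h (t + r) (by omega)
    rw [Finset.sum_congr rfl e, Finset.sum_add_distrib, Finset.sum_add_distrib,
      Finset.sum_sub_distrib, Finset.sum_ite_eq', Finset.sum_ite_eq', Finset.sum_ite_eq',
      Finset.sum_ite_eq',
      if_pos (Finset.mem_range.2 (by omega)), if_pos (Finset.mem_range.2 (by omega)),
      if_pos (Finset.mem_range.2 (by omega)), if_pos (Finset.mem_range.2 (by omega))] at this
    exact this
  refine ⟨w (t - 1), fun i hi => ?_⟩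
  rcases lt_trichotomy i (t - 1) with hi' | hi' | hi'
  · right
    have h1 := bot i (by omega)
    have h2 := top i (by omega)
    have h3 := top (i + 1) (by omega)
    rw [← add_assoc] at h3
    linear_combination h1 - h2 + h3
  · exact Or.inl (by rw [hi'])
  · have := top (i - t) (by omega)
    rw [show t + (i - t) = i by omega] at this
    exact Or.inr (eq_neg_of_add_eq_zero_right this)

end Kernel

/-- A window over a finite ring whose kernel vectors all have the form `(±c, …, ±c)` has
invertible maximal submatrices: a kernel vector of such a submatrix extends by `0` at the deleted
coordinate to a kernel vector of the window, so `c = 0`. -/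
lemma isUnit_det_of_window {R : Type*} [CommRing R] [Finite R] {k n : ℕ} (hn : 0 < n)
    (G : Matrix (Fin k) (Fin n) R) (g : ℕ → ℕ → R) (hg : ∀ m c, G m c = g m c) (off : ℕ)
    (hker : ∀ w : ℕ → R,
      (∀ m < k, ∑ i ∈ Finset.range (k + 1), g m ((off + i) % n) * w i = 0) →
        ∃ c : R, ∀ i < k + 1, w i = c ∨ w i = -c)
    (j : Fin (k + 1)) : IsUnit (G.submatrix id (windowDel hn off j)).det := by
  rw [← Matrix.isUnit_iff_isUnit_det, ← Matrix.mulVec_surjective_iff_isUnit]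
  refine Finite.surjective_of_injective ?_
  refine (injective_iff_map_eq_zero (Matrix.mulVecLin _)).2 fun v hv => ?_
  let u : Fin (k + 1) → R := j.insertNth 0 v
  let w : ℕ → R := fun i => if h : i < k + 1 then u ⟨i, h⟩ else 0
  have hw : ∀ i : Fin (k + 1), w i = u i := fun i => dif_pos i.2
  obtain ⟨c, hc⟩ := hker w (by
    intro m hm
    rw [← Fin.sum_univ_eq_sum_range (fun i => g m ((off + i) % n) * w i),
      Fin.sum_univ_succAbove _ j]
    have := congrFun hv ⟨m, hm⟩
    simpa [Matrix.mulVec, dotProduct, windowDel, hg, hw, u] using this)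
  have hc0 : c = 0 := by
    have := hc j j.2
    rw [hw] at this
    simpa [u, eq_comm] using this
  funext m
  have := hc (j.succAbove m) (j.succAbove m).2
  rw [hw] at this
  simpa [u, hc0] using this

/-- When `k + 1 = 2t` and `n = 3t`, the least `z` is `2`. -/
lemma leastZ_eq_two {t k n : ℕ} (ht : 0 < t) (hk : k + 1 = 2 * t) (hn : n = 3 * t) :
    leastZ k n = 2 := by
  have hmem : 2 ∈ {z : ℕ | 0 < z ∧ (k + 1) ∣ n * z} :=
    ⟨by norm_num, 3, by rw [hk, hn]; ring⟩
  refine le_antisymm (Nat.sInf_le hmem) ?_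
  obtain ⟨hpos, d, hd⟩ : 0 < leastZ k n ∧ (k + 1) ∣ n * leastZ k n := Nat.sInf_mem ⟨2, hmem⟩
  have : 3 * leastZ k n = 2 * d := by
    apply Nat.eq_of_mul_eq_mul_left ht
    subst hn
    rw [hk] at hd
    linarith
  omega

/-- with `k+1 = 2t`, `n = 3t`, the block matrix over `ℤ/qℤ`
`G = [[I_t, 0, 1_t, I_t], [0, I_{t-1}, 1_{t-1}, C(1,-1)]]` satisfies the
`(k,k+1)`-consecutive column property (each one-column-deleted `k × k` submatrix of
each of the three windows of `2t` cyclically consecutive columns has unit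
determinant). -/
theorem stmt_14 {q t k n : ℕ} (hq : 2 ≤ q) (ht : 0 < t)
    (hk : k + 1 = 2 * t) (hn : n = 3 * t) (hn0 : 0 < n)
    (G : Matrix (Fin k) (Fin n) (ZMod q))
    (hG : ∀ (m : Fin k) (c : Fin n),
      G m c =
        if (m : ℕ) < t then
          (if (c : ℕ) < t then (if (m : ℕ) = (c : ℕ) then 1 else 0)
           else if (c : ℕ) < 2 * t - 1 then 0
           else if (c : ℕ) = 2 * t - 1 then 1
           else if (m : ℕ) = (c : ℕ) - 2 * t then 1 else 0)
        else
          (if (c : ℕ) < t then 0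
           else if (c : ℕ) < 2 * t - 1 then
             (if (c : ℕ) - t = (m : ℕ) - t then 1 else 0)
           else if (c : ℕ) = 2 * t - 1 then 1
           else if (c : ℕ) - 2 * t = (m : ℕ) - t then 1
           else if (c : ℕ) - 2 * t = (m : ℕ) - t + 1 then -1
           else 0)) :
    CCP hn0 G := by
  have : NeZero q := ⟨by omega⟩
  intro a ha j
  have ha3 : a < 3 := by
    rwa [leastZ_eq_two ht hk hn, hk, hn, show 3 * t * 2 = 3 * (2 * t) by ring,
      Nat.mul_div_cancel _ (by omega)] at ha
  refine isUnit_det_of_window hn0 G (blockEntry (ZMod q) t) hG _ (fun w hw => ?_) j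
  have hk' : k = 2 * t - 1 := by omega
  rw [hk, hn, hk'] at hw
  rw [hk]
  interval_cases a
  · rw [Nat.zero_mul] at hw
    exact exists_sign_zero ht hw
  · rw [Nat.one_mul] at hw
    exact exists_sign_one hw
  · rw [show 2 * (2 * t) = 4 * t by ring] at hw
    exact exists_sign_two hw
end

section
/- Let R be a commutative ring, c_1, c_2 ∈ R, and t ≥ 2. Let C(c_1,c_2)_{(t−1)×t} be the (t−1)×t matrix whose (r,s) entry (0-indexed) is c_1 if s = r, c_2 if s = r+1, and 0 otherwise. Then for every i ∈ {0, 1, …, t−1}, the (t−1)×(t−1) matrix obtained by deleting column i of C(c_1,c_2)_{(t−1)×t} has determinant exactly c_1^i · c_2^{t−1−i}. -/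
/-!
After deleting column `i`, the columns `s < i` carry `c1` on the diagonal and `c2` just above it,
while the columns `s ≥ i` carry `c2` on the diagonal and `c1` just below it. Hence the matrix is
upper triangular once the indices `≥ i` are listed in reverse order, and its determinant is the
product of its diagonal entries, `i` copies of `c1` and `t - 1 - i` copies of `c2`.
-/

/-- A matrix that is triangular with respect to an injective ranking of its indices by a linear
order has determinant the product of its diagonal entries. -/
lemma det_of_blockTriangular_injective {m α R : Type*} [Fintype m] [DecidableEq m]
    [LinearOrder α] [CommRing R] (M : Matrix m m R) (b : m → α) (hb : Function.Injective b)
    (h : M.BlockTriangular b) : M.det = ∏ i, M i i := by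
  letI : LinearOrder m := LinearOrder.lift' b hb
  have h' : M.BlockTriangular id := fun _ _ hij => h hij
  convert Matrix.det_of_isUpperTriangular h'

/-- deleting column `i` from the `(t-1) × t` band matrix
`C(c₁,c₂)` (whose `(r,s)` entry is `c₁` if `s = r`, `c₂` if `s = r+1`, and `0`
otherwise) yields a square matrix of determinant `c₁^i · c₂^(t-1-i)`. -/
theorem stmt_15 {R : Type*} [CommRing R] (c1 c2 : R) (t : ℕ) (ht : 2 ≤ t)
    (i : Fin t) :
    ((Matrix.of fun (r : Fin (t - 1)) (s : Fin t) =>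
        if (s : ℕ) = (r : ℕ) then c1
        else if (s : ℕ) = (r : ℕ) + 1 then c2 else 0).submatrix id
      (fun s : Fin (t - 1) =>
        if (s : ℕ) < (i : ℕ) then
          ⟨(s : ℕ), lt_of_lt_of_le s.isLt (Nat.sub_le t 1)⟩
        else ⟨(s : ℕ) + 1, Nat.add_lt_of_lt_sub s.isLt⟩)).det =
      c1 ^ (i : ℕ) * c2 ^ (t - 1 - (i : ℕ)) := by
  have hi := i.isLt
  -- The ranking keeps the indices below `i` in order and reverses the remaining ones.
  rw [det_of_blockTriangular_injective _
    (fun s : Fin (t - 1) => if (s : ℕ) < (i : ℕ) then (s : ℕ) else i + (t - 1 - s))]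
  · have hd : ∀ s : Fin (t - 1), (Matrix.of fun (r : Fin (t - 1)) (s : Fin t) =>
        if (s : ℕ) = (r : ℕ) then c1
        else if (s : ℕ) = (r : ℕ) + 1 then c2 else 0).submatrix id
      (fun s : Fin (t - 1) =>
        if (s : ℕ) < (i : ℕ) then
          (⟨(s : ℕ), lt_of_lt_of_le s.isLt (Nat.sub_le t 1)⟩ : Fin t)
        else ⟨(s : ℕ) + 1, Nat.add_lt_of_lt_sub s.isLt⟩) s s =
        (fun k : ℕ => if k < (i : ℕ) then c1 else c2) s := by
      intro s
      by_cases h : (s : ℕ) < i <;> simp [h]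
    rw [Finset.prod_congr rfl fun s _ => hd s,
      Fin.prod_univ_eq_prod_range (fun k : ℕ => if k < (i : ℕ) then c1 else c2) (t - 1),
      ← Finset.prod_range_mul_prod_Ico _ (show (i : ℕ) ≤ t - 1 by omega)]
    congr 1
    · rw [Finset.prod_congr rfl fun k hk => if_pos (Finset.mem_range.1 hk)]
      simp
    · rw [Finset.prod_congr rfl fun k hk => if_neg (not_lt.2 (Finset.mem_Ico.1 hk).1)]
      simp
  · intro r s h
    have hr := r.isLt
    have hs := s.isLt
    apply Fin.ext
    dsimp only at h
    split_ifs at h <;> omega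
  · intro r s h
    have hr := r.isLt
    have hs := s.isLt
    dsimp only at h
    by_cases hsi : (s : ℕ) < i <;> by_cases hri : (r : ℕ) < i <;>
      simp only [hsi, hri, if_true, if_false] at h <;>
      simp only [Matrix.submatrix_apply, Matrix.of_apply, id, hsi, if_true, if_false] <;>
      rw [if_neg (by omega), if_neg (by omega)]
end

section
/- Fix an integer q ≥ 2 and a real number η with 0 < η ≤ 1. Let (k_n) be a sequence of positive integers with lim_{n→∞} k_n/n = η, and let (z_n) be integers with 1 ≤ z_n ≤ k_n + 1 for all n. With K = nq, F_s^{MN} = C(nq, n) (the binomial coefficient, corresponding to the Maddah-Ali–Niesen scheme at cache fraction M/N = 1/q) and F_s^* = q^{k_n}·z_n (the proposed scheme's subpacketization), we have lim_{n→∞} (1/(nq)) · log₂( C(nq, n) / (q^{k_n} z_n) ) = H₂(1/q) − (η/q)·log₂ q, where H₂(p) = −p·log₂ p − (1−p)·log₂(1−p) is the binary entropy function. -/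
/-- The binary entropy function `H₂(p) = -p log₂ p - (1-p) log₂ (1-p)`. -/
noncomputable def binEnt (p : ℝ) : ℝ :=
  -p * Real.logb 2 p - (1 - p) * Real.logb 2 (1 - p)

/-!
By Stirling's formula `log m! = m log m - m + o(m)`. Inserted into
`C(nq, n) = (nq)! / (n! (n(q-1))!)`, the linear terms and the `log n` terms cancel, and
`log C(nq, n) = n (q log q - (q-1) log (q-1)) + o(n)`; the coefficient is `q` times the entropy
(in nats) at `1/q`. Since `k n / n → η`, the factor `q ^ k n` contributes `η log q` per unit of `n`,
and `1 ≤ z n ≤ k n + 1 = O(n)` makes `log (z n) / n` vanish in the limit.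
-/

open Filter Topology

/-- The error `log m! - (m log m - m)` in the leading-order Stirling approximation. -/
noncomputable def stirlingErr (m : ℕ) : ℝ :=
  Real.log (m.factorial : ℝ) - (m * Real.log m - m)

lemma tendsto_log_natCast_div : Tendsto (fun n : ℕ => Real.log (n : ℝ) / n) atTop (𝓝 0) := by
  exact Real.isLittleO_log_id_atTop.tendsto_div_nhds_zero.comp
    (tendsto_natCast_atTop_atTop (R := ℝ))

/-- `log m! = m log m - m + o(m)`. -/
lemma tendsto_stirlingErr_div : Tendsto (fun m : ℕ => stirlingErr m / m) atTop (𝓝 0) := by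
  have h1 : Tendsto (fun m : ℕ => Real.log (Stirling.stirlingSeq m)) atTop
      (𝓝 (Real.log √Real.pi)) :=
    Stirling.tendsto_stirlingSeq_sqrt_pi.log (by positivity)
  have h2 := (h1.add_const (1 / 2 * Real.log 2)).div_atTop
    (tendsto_natCast_atTop_atTop (R := ℝ))
  have h3 := h2.add (tendsto_log_natCast_div.const_mul (1 / 2))
  simp only [mul_zero, add_zero] at h3
  refine h3.congr' ?_
  filter_upwards [eventually_gt_atTop 0] with m hm
  have hm' : (0 : ℝ) < m := by exact_mod_cast hm
  rw [Stirling.log_stirlingSeq_formula, stirlingErr, Real.log_mul (by norm_num) hm'.ne',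
    Real.log_div hm'.ne' (Real.exp_pos 1).ne', Real.log_exp]
  field_simp
  ring

lemma log_choose_mul (q n : ℕ) (hq : 2 ≤ q) (hn : 0 < n) :
    Real.log (Nat.choose (n * q) n : ℝ) =
      n * (q * Real.log q - (q - 1) * Real.log (q - 1)) +
        (stirlingErr (n * q) - stirlingErr n - stirlingErr (n * (q - 1))) := by
  obtain ⟨p, rfl⟩ : ∃ p, q = p + 1 := ⟨q - 1, by omega⟩
  have hp : (0 : ℝ) < p := by exact_mod_cast (by omega : 0 < p)
  have hn' : (0 : ℝ) < n := by exact_mod_cast hn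
  have hf := Nat.add_choose_mul_factorial_mul_factorial n (n * p)
  have e : n + n * p = n * (p + 1) := by ring
  rw [← Nat.choose_symm_add, e] at hf
  have hc : (0 : ℝ) < (Nat.choose (n * (p + 1)) n : ℝ) := by
    exact_mod_cast Nat.choose_pos (Nat.le_mul_of_pos_right n (by omega))
  have hl := congrArg (fun x : ℕ => Real.log (x : ℝ)) hf
  simp only [Nat.cast_mul] at hl
  rw [Real.log_mul (mul_pos hc (by positivity)).ne' (by positivity), Real.log_mul hc.ne' (by positivity)] at hl
  have hp1 : (0 : ℝ) < (p : ℝ) + 1 := by positivity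
  simp only [stirlingErr, Nat.add_sub_cancel]
  push_cast
  rw [Real.log_mul hn'.ne' hp1.ne', Real.log_mul hn'.ne' hp.ne', add_sub_cancel_right, ← hl]
  ring

/-- A sequence with `1 ≤ z n ≤ k n + 1` and `k n = O(n)` has subexponential size. -/
lemma tendsto_log_div_of_le (k z : ℕ → ℕ) (η : ℝ)
    (hklim : Tendsto (fun n : ℕ => (k n : ℝ) / (n : ℝ)) atTop (𝓝 η))
    (hz : ∀ n, 1 ≤ z n ∧ z n ≤ k n + 1) :
    Tendsto (fun n : ℕ => Real.log (z n : ℝ) / n) atTop (𝓝 0) := by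
  have h1 : Tendsto (fun n : ℕ => Real.log (|η| + 2) / n + Real.log (n : ℝ) / n) atTop (𝓝 0) := by
    simpa using (tendsto_const_nhds.div_atTop (tendsto_natCast_atTop_atTop (R := ℝ))).add
      tendsto_log_natCast_div
  refine tendsto_of_tendsto_of_tendsto_of_le_of_le' tendsto_const_nhds h1 ?_ ?_
  · filter_upwards with n
    exact div_nonneg (Real.log_nonneg (by exact_mod_cast (hz n).1)) (by positivity)
  · filter_upwards [hklim.eventually_lt_const (show η < |η| + 1 by linarith [le_abs_self η]),
      eventually_gt_atTop 0] with n hk hn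
    have hn' : (1 : ℝ) ≤ n := by exact_mod_cast hn
    rw [div_lt_iff₀ (by linarith)] at hk
    have hz1 : (1 : ℝ) ≤ z n := by exact_mod_cast (hz n).1
    have hz2 : (z n : ℝ) ≤ k n + 1 := by exact_mod_cast (hz n).2
    rw [← add_div, ← Real.log_mul (by positivity) (by positivity)]
    gcongr
    linarith

/-- The entropy at `1/q` multiplied by `q log 2`. -/
lemma binEnt_one_div (q : ℝ) (hq : 1 < q) :
    binEnt (1 / q) = (q * Real.log q - (q - 1) * Real.log (q - 1)) / (q * Real.log 2) := by
  have h0 : 0 < q := by linarith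
  have h1 : 0 < q - 1 := by linarith
  have h2 : Real.log 2 ≠ 0 := (Real.log_pos one_lt_two).ne'
  have e : 1 - 1 / q = (q - 1) / q := by field_simp
  rw [binEnt, e, Real.logb, Real.logb, Real.log_div h1.ne' h0.ne', one_div, Real.log_inv]
  field_simp
  ring

/-- scaling of the subpacketization gain at cache fraction `1/q`.
With `K = nq`, `F_s^{MN} = C(nq, n)` and `F_s^* = q^{k_n} z_n` where
`k_n / n → η` and `1 ≤ z_n ≤ k_n + 1`,
`(1/K) log₂ (F_s^{MN}/F_s^*) → H₂(1/q) - (η/q) log₂ q`. -/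
theorem stmt_16 (q : ℕ) (hq : 2 ≤ q) (η : ℝ) (hη1 : 0 < η) (hη2 : η ≤ 1)
    (k z : ℕ → ℕ) (hkpos : ∀ n, 0 < k n)
    (hklim : Filter.Tendsto (fun n : ℕ => (k n : ℝ) / (n : ℝ))
      Filter.atTop (nhds η))
    (hz : ∀ n, 1 ≤ z n ∧ z n ≤ k n + 1) :
    Filter.Tendsto
      (fun n : ℕ => (1 / ((n : ℝ) * (q : ℝ))) *
        Real.logb 2 ((Nat.choose (n * q) n : ℝ) / ((q : ℝ) ^ (k n) * (z n : ℝ))))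
      Filter.atTop
      (nhds (binEnt (1 / (q : ℝ)) - (η / (q : ℝ)) * Real.logb 2 (q : ℝ))) := by
  have hq1 : (1 : ℝ) < q := by exact_mod_cast hq
  have hq0 : (0 : ℝ) < q := by linarith
  have hl2 : Real.log 2 ≠ 0 := (Real.log_pos one_lt_two).ne'
  have hmul (c : ℕ) (hc : 0 < c) : Tendsto (fun n : ℕ => stirlingErr (n * c) / n) atTop (𝓝 0) := by
    have h := (tendsto_stirlingErr_div.comp (tendsto_id.atTop_mul_const' hc)).const_mul (c : ℝ)
    rw [mul_zero] at h
    refine h.congr fun n => ?_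
    have hc' : (c : ℝ) ≠ 0 := by exact_mod_cast hc.ne'
    simp only [Function.comp, id, Nat.cast_mul]
    rw [← mul_div_assoc, mul_comm (n : ℝ), mul_div_mul_left _ _ hc']
  have hE := ((hmul q (by omega)).sub tendsto_stirlingErr_div).sub (hmul (q - 1) (by omega))
  have hlim := (((hE.const_add (q * Real.log q - (q - 1) * Real.log (q - 1))).sub
    (hklim.mul_const (Real.log q))).sub (tendsto_log_div_of_le k z η hklim hz)).div_const
    (q * Real.log 2)
  have hval : binEnt (1 / (q : ℝ)) - (η / (q : ℝ)) * Real.logb 2 (q : ℝ) =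
      (q * Real.log q - (q - 1) * Real.log (q - 1) + (0 - 0 - 0) - η * Real.log q - 0) /
        (q * Real.log 2) := by
    rw [binEnt_one_div _ hq1, Real.logb]
    field_simp
    ring
  rw [hval]
  refine hlim.congr' ?_
  filter_upwards [eventually_gt_atTop 0] with n hn
  have hn' : (0 : ℝ) < n := by exact_mod_cast hn
  have hz' : (0 : ℝ) < z n := by exact_mod_cast (hz n).1
  have hc : (0 : ℝ) < (Nat.choose (n * q) n : ℝ) := by
    exact_mod_cast Nat.choose_pos (Nat.le_mul_of_pos_right n (by omega))
  rw [Real.logb, Real.log_div hc.ne' (by positivity), Real.log_mul (by positivity) hz'.ne',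
    Real.log_pow, log_choose_mul q n hq hn]
  field_simp
  ring
end
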